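/- arXiv:1903.09526 — 4 statements merged into one kernel-verified Lean document; each statement's English description precedes it below -/
import Mathlib

section
/- Let m ≥ 2 be an integer and let β ∈ [1/2, 1). Then every β-harmonic function u : T_m → ℝ that is not constant is unbounded; equivalently, every bounded β-harmonic function on T_m is constant. -/
open MeasureTheory Filter

noncomputable def psiV (m : ℕ) (x : List (Fin m)) : ℝ :=
  ∑ i : Fin x.length, ((x.get i : ℕ) : ℝ) * ((m : ℝ) ^ (i.1 + 1))⁻¹

noncomputable def psiB (m : ℕ) (π : ℕ → Fin m) : ℝ :=
  ∑' k : ℕ, ((π k : ℕ) : ℝ) * ((m : ℝ) ^ (k + 1))⁻¹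

def trunc (m : ℕ) (π : ℕ → Fin m) (k : ℕ) : List (Fin m) :=
  List.ofFn (fun i : Fin k => π i)

noncomputable def Ix (m : ℕ) (x : List (Fin m)) : Set ℝ :=
  Set.Icc (psiV m x) (psiV m x + ((m : ℝ) ^ x.length)⁻¹)

def BHarmonic (m : ℕ) (β : ℝ) (u : List (Fin m) → ℝ) : Prop :=
  u [] = (1 / (m : ℝ)) * ∑ j : Fin m, u [j] ∧
  ∀ x : List (Fin m), x ≠ [] →
    u x = β * u x.dropLast + ((1 - β) / (m : ℝ)) * ∑ i : Fin m, u (x ++ [i])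

def BoundaryDatum (m : ℕ) (u : List (Fin m) → ℝ) (g : ℝ → ℝ) : Prop :=
  ∀ π : ℕ → Fin m,
    Tendsto (fun k => u (trunc m π k)) atTop (nhds (g (psiB m π)))

def BoundedFun (m : ℕ) (u : List (Fin m) → ℝ) : Prop :=
  ∃ C : ℝ, ∀ x : List (Fin m), |u x| ≤ C


lemma step_aux (m : ℕ) (hm : 2 ≤ m) (β : ℝ) (hβ1 : 1 / 2 ≤ β) (hβ2 : β < 1)
    (u : List (Fin m) → ℝ) (hu : BHarmonic m β u) (d : ℝ) (hd : 0 < d)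
    (x : List (Fin m)) (hx : x ≠ []) (h : d ≤ u x - u x.dropLast) :
    ∃ i : Fin m, d ≤ u (x ++ [i]) - u x := by
  by_contra! hc
  have hm0 : (0 : ℝ) < m := by
    have : 0 < m := by omega
    exact_mod_cast this
  have hs' : ∑ i : Fin m, u (x ++ [i]) < m * (u x + d) := by
    have := Finset.sum_lt_sum_of_nonempty (s := Finset.univ)
      (f := fun i : Fin m => u (x ++ [i])) (g := fun _ => u x + d)
      ⟨⟨0, by omega⟩, Finset.mem_univ _⟩ (fun i _ => by have := hc i; linarith)
    simpa [mul_add] using this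
  have h2 := hu.2 x hx
  have h3 : ((1 - β) / (m : ℝ)) * ∑ i : Fin m, u (x ++ [i]) < (1 - β) * (u x + d) := by
    calc _ < ((1 - β) / (m : ℝ)) * (m * (u x + d)) :=
          mul_lt_mul_of_pos_left hs' (div_pos (by linarith) hm0)
      _ = _ := by field_simp
  nlinarith [mul_le_mul_of_nonneg_left h (by linarith : (0 : ℝ) ≤ β)]

lemma grow_aux (m : ℕ) (hm : 2 ≤ m) (β : ℝ) (hβ1 : 1 / 2 ≤ β) (hβ2 : β < 1)
    (u : List (Fin m) → ℝ) (hu : BHarmonic m β u) (hb : BoundedFun m u)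
    (x : List (Fin m)) (hx : x ≠ []) : u x ≤ u x.dropLast := by
  by_contra! hlt
  obtain ⟨C, hC⟩ := hb
  obtain ⟨d, hd⟩ : ∃ d, d = u x - u x.dropLast := ⟨_, rfl⟩
  have hd0 : 0 < d := by linarith
  have key : ∀ n : ℕ, ∃ y : List (Fin m), y ≠ [] ∧ d ≤ u y - u y.dropLast ∧
      u x + n * d ≤ u y := by
    intro n
    induction n with
    | zero => exact ⟨x, hx, hd.le, by simp⟩
    | succ n ih =>
      obtain ⟨y, hy, h1, h2⟩ := ih
      obtain ⟨i, hi⟩ := step_aux m hm β hβ1 hβ2 u hu d hd0 y hy h1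
      refine ⟨y ++ [i], by simp, by simpa using hi, ?_⟩
      push_cast
      linarith
  obtain ⟨n, hn⟩ := exists_nat_gt ((C - u x) / d)
  obtain ⟨y, -, -, h⟩ := key n
  rw [div_lt_iff₀ hd0] at hn
  linarith [le_abs_self (u y), hC y]

theorem stmt1 (m : ℕ) (hm : 2 ≤ m) (β : ℝ) (hβ1 : 1 / 2 ≤ β) (hβ2 : β < 1)
    (u : List (Fin m) → ℝ) (hu : BHarmonic m β u) (hb : BoundedFun m u) :
    ∀ x : List (Fin m), u x = u [] := by
  have hu' : BHarmonic m β (fun x => - u x) := by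
    refine ⟨?_, fun x hx => ?_⟩
    · simp only [Finset.sum_neg_distrib]
      linarith [hu.1]
    · simp only [Finset.sum_neg_distrib]
      linarith [hu.2 x hx]
  have hb' : BoundedFun m (fun x => - u x) := by
    obtain ⟨C, hC⟩ := hb
    exact ⟨C, fun x => by simpa using hC x⟩
  intro x
  induction x using List.reverseRecOn with
  | nil => rfl
  | append_singleton l a ih =>
    have h1 := grow_aux m hm β hβ1 hβ2 u hu hb (l ++ [a]) (by simp)
    have h2 := grow_aux m hm β hβ1 hβ2 _ hu' hb' (l ++ [a]) (by simp)
    simp only [List.dropLast_concat] at h1 h2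
    linarith
end

section
/- Let m ≥ 2 be an integer, g ∈ C²([0,1]), η = (η_0,...,η_{m-1}) ∈ ℝ^m, and let u be the unique bounded 0-harmonic function on T_m with boundary datum g (explicitly, u(x) = ⨍_{I_x} g(t) dt). Then for every branch π with truncations x_k, lim_{k→∞} m^k · Σ_{i=0}^{m-1} η_i·(u((x_k,i)) − u(x_k)) = g'(ψ(π)) · Σ_{i=0}^{m-1} η_i·(2i+1−m)/(2m). -/
open MeasureTheory Filter

lemma avg_est (g : ℝ → ℝ) (a b c d p E : ℝ) (hab : a < b) (hg : ContinuousOn g (Set.Icc a b))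
    (h : ∀ t ∈ Set.Icc a b, |g t - (c + d * (t - p))| ≤ E) :
    |(⨍ t in Set.Icc a b, g t) - (c + d * ((a + b) / 2 - p))| ≤ E := by
  have hb : 0 < b - a := by linarith
  have h1 : (⨍ t in Set.Icc a b, g t) = (b - a)⁻¹ * ∫ t in a..b, g t := by
    rw [setAverage_eq, intervalIntegral.integral_of_le hab.le, integral_Icc_eq_integral_Ioc]
    simp [Measure.real, hab.le]
  have hi : IntervalIntegrable g volume a b :=
    ContinuousOn.intervalIntegrable (by rwa [Set.uIcc_of_le hab.le])
  have hl : IntervalIntegrable (fun t => c + d * (t - p)) volume a b :=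
    Continuous.intervalIntegrable (by fun_prop) _ _
  have h2 : ∫ t in a..b, (c + d * (t - p)) = (b - a) * (c + d * ((a + b) / 2 - p)) := by
    have e : (fun t : ℝ => c + d * (t - p)) = fun t => (c - d * p) + d * t := by
      funext t; ring
    rw [e, intervalIntegral.integral_add (by simp) (Continuous.intervalIntegrable (by fun_prop) _ _),
      intervalIntegral.integral_const, intervalIntegral.integral_const_mul, integral_id]
    simp only [smul_eq_mul]
    ring
  have h3 : ‖∫ t in a..b, (g t - (c + d * (t - p)))‖ ≤ E * |b - a| := by
    apply intervalIntegral.norm_integral_le_of_norm_le_const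
    intro t ht
    rw [Set.uIoc_of_le hab.le] at ht
    exact h t ⟨ht.1.le, ht.2⟩
  rw [intervalIntegral.integral_sub hi hl, h2, Real.norm_eq_abs, abs_of_pos hb] at h3
  rw [h1]
  have e : (b - a)⁻¹ * (∫ t in a..b, g t) - (c + d * ((a + b) / 2 - p))
      = (b - a)⁻¹ * ((∫ t in a..b, g t) - (b - a) * (c + d * ((a + b) / 2 - p))) := by
    field_simp
  rw [e, abs_mul, abs_of_pos (inv_pos.2 hb), inv_mul_le_iff₀ hb]
  linarith

noncomputable def SS (m : ℕ) (π : ℕ → Fin m) (k : ℕ) : ℝ :=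
  ∑ j ∈ Finset.range k, ((π j : ℕ) : ℝ) * ((m : ℝ) ^ (j + 1))⁻¹

lemma psiV_trunc (m : ℕ) (π : ℕ → Fin m) (k : ℕ) : psiV m (trunc m π k) = SS m π k := by
  unfold psiV trunc SS
  rw [Finset.sum_range]
  have hl : (List.ofFn (fun i : Fin k => π i)).length = k := by simp
  refine Fintype.sum_equiv (finCongr hl) _ _ ?_
  intro i
  simp

lemma trunc_append (m : ℕ) (π : ℕ → Fin m) (k : ℕ) (i : Fin m) :
    trunc m π k ++ [i] = trunc m (Function.update π k i) (k + 1) := by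
  unfold trunc
  rw [List.ofFn_succ_last]
  congr 1
  · congr 1
    funext j
    simp [Function.update_of_ne (ne_of_lt j.2)]
  · simp

lemma SS_update (m : ℕ) (π : ℕ → Fin m) (k : ℕ) (i : Fin m) :
    SS m (Function.update π k i) (k + 1) = SS m π k + (i : ℕ) * ((m : ℝ) ^ (k + 1))⁻¹ := by
  unfold SS
  rw [Finset.sum_range_succ]
  congr 1
  · apply Finset.sum_congr rfl
    intro j hj
    rw [Function.update_of_ne (ne_of_lt (Finset.mem_range.1 hj))]
  · simp

lemma SS_mono (m : ℕ) (π : ℕ → Fin m) : Monotone (SS m π) := by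
  apply monotone_nat_of_le_succ
  intro n
  unfold SS
  rw [Finset.sum_range_succ]
  have : 0 ≤ ((π n : ℕ) : ℝ) * ((m : ℝ) ^ (n + 1))⁻¹ := by positivity
  linarith

lemma SS_anti (m : ℕ) (hm : 2 ≤ m) (π : ℕ → Fin m) :
    Antitone (fun k => SS m π k + ((m : ℝ) ^ k)⁻¹) := by
  apply antitone_nat_of_succ_le
  intro n
  unfold SS
  rw [Finset.sum_range_succ]
  have hm0 : (0 : ℝ) < m := by positivity
  have h1 : ((π n : ℕ) : ℝ) + 1 ≤ m := by exact_mod_cast (π n).2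
  have h2 : ((m : ℝ) ^ n)⁻¹ = m * ((m : ℝ) ^ (n + 1))⁻¹ := by
    rw [pow_succ]; field_simp
  have h3 : 0 < ((m : ℝ) ^ (n + 1))⁻¹ := by positivity
  rw [h2]
  nlinarith

lemma SS_bounds (m : ℕ) (hm : 2 ≤ m) (π : ℕ → Fin m) (k : ℕ) :
    0 ≤ SS m π k ∧ SS m π k + ((m : ℝ) ^ k)⁻¹ ≤ 1 := by
  refine ⟨?_, ?_⟩
  · have := SS_mono m π (Nat.zero_le k)
    simpa [SS] using this
  · have := SS_anti m hm π (Nat.zero_le k)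
    simpa [SS] using this

lemma psiB_bounds (m : ℕ) (hm : 2 ≤ m) (π : ℕ → Fin m) (k : ℕ) :
    SS m π k ≤ psiB m π ∧ psiB m π ≤ SS m π k + ((m : ℝ) ^ k)⁻¹ := by
  have hs : Summable (fun k : ℕ => ((π k : ℕ) : ℝ) * ((m : ℝ) ^ (k + 1))⁻¹) := by
    apply summable_of_sum_range_le (c := 1)
    · intro n; positivity
    · intro n
      have := (SS_bounds m hm π n).2
      have h3 : 0 < ((m : ℝ) ^ n)⁻¹ := by positivity
      unfold SS at this
      linarith
  have ht : Tendsto (SS m π) atTop (nhds (psiB m π)) := hs.hasSum.tendsto_sum_nat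
  refine ⟨(SS_mono m π).ge_of_tendsto ht k, ?_⟩
  apply le_of_tendsto ht
  filter_upwards [eventually_ge_atTop k] with n hn
  have := SS_anti m hm π hn
  have h3 : 0 < ((m : ℝ) ^ n)⁻¹ := by positivity
  simp only at this
  linarith

theorem stmt8 (m : ℕ) (hm : 2 ≤ m) (g : ℝ → ℝ) (hg : ContDiffOn ℝ 2 g (Set.Icc 0 1))
    (η : Fin m → ℝ) (u : List (Fin m) → ℝ)
    (hu : ∀ x : List (Fin m), u x = ⨍ t in Ix m x, g t)
    (π : ℕ → Fin m) :
    Tendsto (fun k => (m : ℝ) ^ k *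
        ∑ i : Fin m, η i * (u (trunc m π k ++ [i]) - u (trunc m π k))) atTop
      (nhds (derivWithin g (Set.Icc 0 1) (psiB m π) *
        ∑ i : Fin m, η i * (2 * ((i : ℕ) : ℝ) + 1 - m) / (2 * m))) := by
  have hm0 : (0 : ℝ) < m := by positivity
  set p := psiB m π with hp
  set d := derivWithin g (Set.Icc 0 1) p with hd
  have hpm : p ∈ Set.Icc (0 : ℝ) 1 := by
    have := psiB_bounds m hm π 0
    simpa [SS] using this
  have hder : HasDerivWithinAt g d (Set.Icc 0 1) p :=
    ((hg.differentiableOn (by norm_num)) p hpm).hasDerivWithinAt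
  have hgc : ContinuousOn g (Set.Icc 0 1) := hg.continuousOn
  have key : ∀ i : Fin m, Tendsto (fun k => (m : ℝ) ^ k *
      (u (trunc m π k ++ [i]) - u (trunc m π k))) atTop
      (nhds (d * ((2 * ((i : ℕ) : ℝ) + 1 - m) / (2 * m)))) := by
    intro i
    rw [Metric.tendsto_nhds]
    intro ε hε
    have hlo := (hasDerivWithinAt_iff_isLittleO.1 hder).def (show (0 : ℝ) < ε / 3 by positivity)
    rw [eventually_nhdsWithin_iff, Metric.eventually_nhds_iff_ball] at hlo
    obtain ⟨δ, hδ, hlo⟩ := hlo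
    have hh : Tendsto (fun k : ℕ => ((m : ℝ) ^ k)⁻¹) atTop (nhds 0) := by
      apply tendsto_inv_atTop_zero.comp
      apply tendsto_pow_atTop_atTop_of_one_lt
      exact_mod_cast (by omega : 1 < m)
    filter_upwards [hh.eventually (gt_mem_nhds hδ)] with k hk
    set h := ((m : ℝ) ^ k)⁻¹ with hhdef
    have hpos : 0 < h := by positivity
    have hmk : (m : ℝ) ^ k = h⁻¹ := by rw [hhdef, inv_inv]
    obtain ⟨hb1, hb2⟩ := psiB_bounds m hm π k
    obtain ⟨hc1, hc2⟩ := SS_bounds m hm π k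
    have hh1 : ((m : ℝ) ^ (k + 1))⁻¹ = h / m := by
      rw [pow_succ, mul_inv, hhdef, div_eq_mul_inv]
    have est : ∀ a b : ℝ, a < b → SS m π k ≤ a → b ≤ SS m π k + h →
        |(⨍ t in Set.Icc a b, g t) - (g p + d * ((a + b) / 2 - p))| ≤ ε / 3 * h := by
      intro a b hab ha hb
      have hsub : Set.Icc a b ⊆ Set.Icc 0 1 := Set.Icc_subset_Icc (by linarith) (by linarith)
      apply avg_est _ _ _ _ _ _ _ hab (hgc.mono hsub)
      intro t ht
      have htp : |t - p| ≤ h := by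
        rw [abs_le]; constructor <;> linarith [ht.1, ht.2]
      have := hlo t (show t ∈ Metric.ball p δ by
        rw [Metric.mem_ball, Real.dist_eq]; linarith) (hsub ht)
      simp only [Real.norm_eq_abs, smul_eq_mul] at this
      have e : g t - (g p + d * (t - p)) = g t - g p - (t - p) * d := by ring
      rw [e]
      refine this.trans ?_
      gcongr
    have e1 := est (SS m π k) (SS m π k + h) (by linarith) le_rfl le_rfl
    have hi1 : ((i : ℕ) : ℝ) + 1 ≤ m := by exact_mod_cast i.2
    have hm1 : 0 < h / m := by positivity
    have hmm : m * (h / m) = h := by field_simp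
    have e2 := est (SS m π k + (i : ℕ) * (h / m)) (SS m π k + (i : ℕ) * (h / m) + h / m)
      (by linarith) (by have : (0:ℝ) ≤ (i : ℕ) * (h / m) := by positivity
                        linarith) (by nlinarith)
    have l1 : (trunc m π k).length = k := by simp [trunc]
    have l2 : (trunc m π k ++ [i]).length = k + 1 := by simp [trunc]
    have u1 : u (trunc m π k) = ⨍ t in Set.Icc (SS m π k) (SS m π k + h), g t := by
      rw [hu, Ix, l1, psiV_trunc]
    have u2 : u (trunc m π k ++ [i]) = ⨍ t in Set.Icc (SS m π k + (i : ℕ) * (h / m))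
        (SS m π k + (i : ℕ) * (h / m) + h / m), g t := by
      rw [hu, Ix, l2, trunc_append, psiV_trunc, SS_update, hh1]
    rw [← u1] at e1
    rw [← u2] at e2
    rw [Real.dist_eq, hmk]
    generalize u (trunc m π k ++ [i]) = U at *
    generalize u (trunc m π k) = V at *
    have e : h⁻¹ * (U - V) - d * ((2 * ((i : ℕ) : ℝ) + 1 - m) / (2 * m)) =
      h⁻¹ * ((U - (g p + d * ((SS m π k + (i : ℕ) * (h / m)
        + (SS m π k + (i : ℕ) * (h / m) + h / m)) / 2 - p)))
        - (V - (g p + d * ((SS m π k + (SS m π k + h)) / 2 - p)))) := by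
      field_simp
      ring
    rw [e, abs_mul, abs_of_pos (inv_pos.2 hpos), inv_mul_lt_iff₀ hpos]
    refine (abs_sub _ _).trans_lt ?_
    nlinarith
  have := tendsto_finsetSum Finset.univ (fun i _ => (key i).const_mul (η i))
  convert this using 2
  · rw [Finset.mul_sum]
    exact Finset.sum_congr rfl fun i _ => by ring
  · rw [Finset.mul_sum]
    exact Finset.sum_congr rfl fun i _ => by ring
end

section
/- Let m ≥ 2 be an integer, g ∈ C²([0,1]), η = (η_0,...,η_{m-1}) ∈ ℝ^m, and let u be the unique bounded 0-harmonic function on T_m with boundary datum g (explicitly, u(x) = ⨍_{I_x} g(t) dt). Then there is a constant C ≥ 0 (depending only on g, η and m) such that for every x ∈ T_m, |Σ_{i=0}^{m-1} η_i·(u((x,i)) − u(x)) − g'(t_x)·m^{−|x|}·Σ_{i=0}^{m-1} η_i·(2i+1−m)/(2m)| ≤ C·m^{−2|x|}, where t_x := ψ(x) + (1/2)·m^{−|x|} is the midpoint of I_x. -/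
open MeasureTheory Filter

theorem psiV_append (m : ℕ) (x : List (Fin m)) (i : Fin m) :
    psiV m (x ++ [i]) = psiV m x + ((i : ℕ) : ℝ) * ((m : ℝ) ^ (x.length + 1))⁻¹ := by
  have hl : x.length + 1 = (x ++ [i]).length := by simp
  unfold psiV
  rw [← Equiv.sum_comp (finCongr hl), Fin.sum_univ_castSucc]
  congr 1
  · apply Finset.sum_congr rfl
    intro k _
    simp [List.getElem_append_left]
  · simp

theorem psiV_bounds (m : ℕ) (hm : 2 ≤ m) (x : List (Fin m)) :
    0 ≤ psiV m x ∧ psiV m x + ((m : ℝ) ^ x.length)⁻¹ ≤ 1 := by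
  have hm0 : (0 : ℝ) < m := by
    have : 0 < m := by omega
    exact_mod_cast this
  induction x using List.reverseRecOn with
  | nil => simp [psiV]
  | append_singleton x i ih =>
    rw [psiV_append]
    have hi : ((i : ℕ) : ℝ) + 1 ≤ m := by exact_mod_cast i.2
    have hp : (0 : ℝ) < ((m : ℝ) ^ (x.length + 1))⁻¹ := by positivity
    have he : ((m : ℝ) ^ x.length)⁻¹ = m * ((m : ℝ) ^ (x.length + 1))⁻¹ := by
      rw [pow_succ]; field_simp
    constructor
    · have := ih.1
      positivity
    · have h2 := ih.2
      rw [he] at h2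
      simp only [List.length_append, List.length_singleton]
      nlinarith [mul_le_mul_of_nonneg_right hi hp.le]

theorem taylor_bound (g : ℝ → ℝ) (hg : ContDiffOn ℝ 2 g (Set.Icc 0 1)) :
    ∃ K : ℝ, 0 ≤ K ∧ ∀ c ∈ Set.Icc (0:ℝ) 1, ∀ s ∈ Set.Icc (0:ℝ) 1,
      |g s - g c - derivWithin g (Set.Icc 0 1) c * (s - c)| ≤ K * (s - c) ^ 2 := by
  have hU : UniqueDiffOn ℝ (Set.Icc (0:ℝ) 1) := uniqueDiffOn_Icc one_pos
  have h1 : ContDiffOn ℝ 1 (derivWithin g (Set.Icc 0 1)) (Set.Icc 0 1) :=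
    hg.derivWithin hU (by norm_num)
  have h2 := h1.continuousOn_derivWithin hU le_rfl
  obtain ⟨K, hK⟩ := isCompact_Icc.exists_bound_of_continuousOn h2
  have hK0 : 0 ≤ K := (norm_nonneg _).trans (hK 0 (by simp))
  have hgd := hg.differentiableOn (by norm_num)
  have hgd' := h1.differentiableOn (by norm_num)
  refine ⟨K, hK0, fun c hc s hs => ?_⟩
  have hsub : Set.uIcc c s ⊆ Set.Icc 0 1 := Set.uIcc_subset_Icc hc hs
  have hL : ∀ t ∈ Set.Icc (0:ℝ) 1, ‖derivWithin g (Set.Icc 0 1) t - derivWithin g (Set.Icc 0 1) c‖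
      ≤ K * ‖t - c‖ := fun t ht =>
    Convex.norm_image_sub_le_of_norm_hasDerivWithin_le
      (fun y hy => (hgd' y hy).hasDerivWithinAt) hK (convex_Icc 0 1) hc ht
  have := Convex.norm_image_sub_le_of_norm_hasDerivWithin_le (s := Set.uIcc c s)
    (f := fun t => g t - derivWithin g (Set.Icc 0 1) c * t)
    (f' := fun t => derivWithin g (Set.Icc 0 1) t - derivWithin g (Set.Icc 0 1) c)
    (C := K * |s - c|) (x := c) (y := s)
    (fun y hy => by
      have a := ((hgd y (hsub hy)).hasDerivWithinAt).mono hsub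
      have b := ((hasDerivWithinAt_id y (Set.uIcc c s)).const_mul (derivWithin g (Set.Icc 0 1) c))
      simpa using a.fun_sub b)
    (fun y hy => (hL y (hsub hy)).trans (by
      apply mul_le_mul_of_nonneg_left _ hK0
      exact Set.abs_sub_left_of_mem_uIcc hy))
    (convex_uIcc c s) Set.left_mem_uIcc Set.right_mem_uIcc
  rw [Real.norm_eq_abs, Real.norm_eq_abs, mul_assoc, abs_mul_abs_self] at this
  calc _ = _ := by congr 1; ring
    _ ≤ _ := this
    _ = _ := by ring

theorem avg_bound (g : ℝ → ℝ) (hg : ContinuousOn g (Set.Icc 0 1)) (K D c L a h : ℝ)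
    (hK0 : 0 ≤ K) (hh : 0 < h) (ha : 0 ≤ a) (hb : a + h ≤ 1)
    (hK : ∀ s ∈ Set.Icc (0:ℝ) 1, |g s - g c - D * (s - c)| ≤ K * (s - c) ^ 2)
    (hL : ∀ s ∈ Set.Icc a (a + h), |s - c| ≤ L) :
    |(⨍ t in Set.Icc a (a + h), g t) - g c - D * (a + h / 2 - c)| ≤ K * L ^ 2 := by
  have hab : a ≤ a + h := by linarith
  have hi : IntervalIntegrable g volume a (a + h) := by
    apply ContinuousOn.intervalIntegrable
    rw [Set.uIcc_of_le hab]
    exact hg.mono (Set.Icc_subset_Icc ha hb)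
  have hb' := intervalIntegral.norm_integral_le_of_norm_le_const (a := a) (b := a + h)
    (C := K * L ^ 2) (f := fun s => g s - (g c + D * (s - c))) (fun s hs => by
      rw [Set.uIoc_of_le hab] at hs
      have hs' : s ∈ Set.Icc a (a + h) := ⟨hs.1.le, hs.2⟩
      have h1 := hK s ⟨ha.trans hs'.1, hs'.2.trans hb⟩
      have h2 := hL s hs'
      have h3 : (s - c) ^ 2 ≤ L ^ 2 := by
        rw [← sq_abs]; exact pow_le_pow_left₀ (abs_nonneg _) h2 2
      rw [Real.norm_eq_abs, ← sub_sub]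
      exact h1.trans (mul_le_mul_of_nonneg_left h3 hK0))
  have hint : ∫ s in a..(a + h), (g c + D * (s - c)) = h * (g c + D * (a + h / 2 - c)) := by
    rw [intervalIntegral.integral_add (by simp) (Continuous.intervalIntegrable (by fun_prop) _ _),
      intervalIntegral.integral_const_mul,
      intervalIntegral.integral_sub (by simp) (by simp)]
    simp
    ring
  rw [intervalIntegral.integral_sub hi (Continuous.intervalIntegrable (by fun_prop) _ _), hint,
    Real.norm_eq_abs, add_sub_cancel_left, abs_of_pos hh] at hb'
  rw [setAverage_eq, Real.volume_real_Icc_of_le hab, integral_Icc_eq_integral_Ioc,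
    ← intervalIntegral.integral_of_le hab, add_sub_cancel_left, smul_eq_mul]
  have e : h⁻¹ * (∫ s in a..(a + h), g s) - g c - D * (a + h / 2 - c) =
      h⁻¹ * ((∫ s in a..(a + h), g s) - h * (g c + D * (a + h / 2 - c))) := by
    field_simp
    ring
  rw [e, abs_mul, abs_of_pos (inv_pos.2 hh)]
  calc _ ≤ h⁻¹ * (K * L ^ 2 * h) := mul_le_mul_of_nonneg_left hb' (inv_pos.2 hh).le
    _ = _ := by field_simp

theorem stmt9 (m : ℕ) (hm : 2 ≤ m) (g : ℝ → ℝ) (hg : ContDiffOn ℝ 2 g (Set.Icc 0 1))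
    (η : Fin m → ℝ) (u : List (Fin m) → ℝ)
    (hu : ∀ x : List (Fin m), u x = ⨍ t in Ix m x, g t) :
    ∃ C : ℝ, 0 ≤ C ∧ ∀ x : List (Fin m),
      |(∑ i : Fin m, η i * (u (x ++ [i]) - u x)) -
        derivWithin g (Set.Icc 0 1) (psiV m x + (1 / 2) * ((m : ℝ) ^ x.length)⁻¹) *
          ((m : ℝ) ^ x.length)⁻¹ *
          ∑ i : Fin m, η i * (2 * ((i : ℕ) : ℝ) + 1 - m) / (2 * m)| ≤
      C * ((m : ℝ) ^ (2 * x.length))⁻¹ := by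
  obtain ⟨K, hK0, hK⟩ := taylor_bound g hg
  have hm0 : (0 : ℝ) < m := by
    have : 0 < m := by omega
    exact_mod_cast this
  refine ⟨2 * K * ∑ i, |η i|, by positivity, fun x => ?_⟩
  obtain ⟨hx0, hx1⟩ := psiV_bounds m hm x
  have hhpos : (0 : ℝ) < ((m : ℝ) ^ x.length)⁻¹ := by positivity
  have hsq : ((m : ℝ) ^ (2 * x.length))⁻¹ = (((m : ℝ) ^ x.length)⁻¹) ^ 2 := by
    rw [mul_comm, pow_mul, inv_pow]
  have hpi : ∀ i : Fin m, psiV m (x ++ [i]) =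
      psiV m x + ((i : ℕ) : ℝ) * (((m : ℝ) ^ x.length)⁻¹ / m) := by
    intro i
    rw [psiV_append, pow_succ, mul_inv, div_eq_mul_inv]
  have hli : ∀ i : Fin m, ((m : ℝ) ^ (x ++ [i]).length)⁻¹ = ((m : ℝ) ^ x.length)⁻¹ / m := by
    intro i
    rw [List.length_append, List.length_singleton, pow_succ, mul_inv, div_eq_mul_inv]
  rw [hsq]
  have hux := hu x
  have hui := fun i : Fin m => hu (x ++ [i])
  have hbi := fun i : Fin m => psiV_bounds m hm (x ++ [i])
  unfold Ix at hux hui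
  simp only [hpi, hli] at hui hbi
  set h : ℝ := ((m : ℝ) ^ x.length)⁻¹ with hh
  set p : ℝ := psiV m x with hp
  set c : ℝ := p + 1 / 2 * h with hc
  set D : ℝ := derivWithin g (Set.Icc 0 1) c with hD
  have hcm : c ∈ Set.Icc (0:ℝ) 1 := ⟨by positivity, by linarith⟩
  have hLx : ∀ s ∈ Set.Icc p (p + h), |s - c| ≤ h := fun s hs => by
    rw [abs_le]; constructor <;> linarith [hs.1, hs.2]
  have A := avg_bound g hg.continuousOn K D c h p h hK0 hhpos hx0 hx1 (hK c hcm) hLx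
  rw [← hux] at A
  have hterm : ∀ i : Fin m,
      |u (x ++ [i]) - u x - D * h * ((2 * ((i : ℕ) : ℝ) + 1 - m) / (2 * m))| ≤ 2 * K * h ^ 2 := by
    intro i
    have hq : 0 < h / m := by positivity
    have hle : ((i : ℕ) : ℝ) * (h / m) + h / m ≤ h := by
      have hi : ((i : ℕ) : ℝ) + 1 ≤ m := by exact_mod_cast i.2
      have h3 := mul_le_mul_of_nonneg_right hi hq.le
      have h4 : (m : ℝ) * (h / m) = h := by field_simp
      linarith
    have h0 : 0 ≤ ((i : ℕ) : ℝ) * (h / m) := by positivity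
    have B := avg_bound g hg.continuousOn K D c h (p + ((i : ℕ) : ℝ) * (h / m)) (h / m) hK0 hq
      (hbi i).1 (hbi i).2 (hK c hcm)
      (fun s hs => hLx s ⟨by linarith [hs.1], by linarith [hs.2]⟩)
    rw [← hui i] at B
    have e : u (x ++ [i]) - u x - D * h * ((2 * ((i : ℕ) : ℝ) + 1 - m) / (2 * m)) =
        (u (x ++ [i]) - g c - D * (p + ((i : ℕ) : ℝ) * (h / m) + h / m / 2 - c)) -
        (u x - g c - D * (p + h / 2 - c)) := by
      rw [hc]
      field_simp
      ring
    rw [e]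
    refine (abs_sub _ _).trans ?_
    linarith
  have e : (∑ i : Fin m, η i * (u (x ++ [i]) - u x)) -
      D * h * ∑ i : Fin m, η i * (2 * ((i : ℕ) : ℝ) + 1 - m) / (2 * m) =
      ∑ i : Fin m, η i *
        (u (x ++ [i]) - u x - D * h * ((2 * ((i : ℕ) : ℝ) + 1 - m) / (2 * m))) := by
    rw [Finset.mul_sum, ← Finset.sum_sub_distrib]
    apply Finset.sum_congr rfl
    intro i _
    ring
  rw [e]
  calc _ ≤ ∑ i : Fin m, |η i *
        (u (x ++ [i]) - u x - D * h * ((2 * ((i : ℕ) : ℝ) + 1 - m) / (2 * m)))| :=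
        Finset.abs_sum_le_sum_abs _ _
    _ ≤ ∑ i : Fin m, |η i| * (2 * K * h ^ 2) := by
        apply Finset.sum_le_sum
        intro i _
        rw [abs_mul]
        exact mul_le_mul_of_nonneg_left (hterm i) (abs_nonneg _)
    _ = _ := by rw [← Finset.sum_mul]; ring
end

section
/- The strong comparison (and strong maximum) principle fails for β = 0: on the tree T_3 there exists a bounded 0-harmonic function u : T_3 → ℝ with u(x) ≥ 0 for all x ∈ T_3, u(x₀) = 0 for some vertex x₀ (one may take x₀ = (0), the first successor of the root), and u not identically zero (indeed u((2)) = 1). -/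
theorem stmt14 :
    ∃ u : List (Fin 3) → ℝ,
      (∃ C : ℝ, ∀ x : List (Fin 3), |u x| ≤ C) ∧
      (∀ x : List (Fin 3), u x = (1 / 3) * ∑ i : Fin 3, u (x ++ [i])) ∧
      (∀ x : List (Fin 3), 0 ≤ u x) ∧
      u [(0 : Fin 3)] = 0 ∧ u [(2 : Fin 3)] = 1 := by
  refine ⟨fun x => match x with
    | [] => 1 / 3
    | a :: _ => if a = 2 then 1 else 0, ⟨1, ?_⟩, ?_, ?_, ?_, ?_⟩
  · rintro (_ | ⟨a, l⟩)
    · norm_num [abs_le]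
    · dsimp only
      split_ifs <;> norm_num
  · rintro (_ | ⟨a, l⟩)
    · simp [Fin.sum_univ_three]
    · simp only [List.cons_append, Fin.sum_univ_three]
      split_ifs <;> norm_num
  · rintro (_ | ⟨a, l⟩)
    · norm_num
    · dsimp only
      split_ifs <;> norm_num
  · simp
  · simp
end
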